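/- Let R be a commutative ring, ι an index set, and for each pair (i, j) ∈ ι × ι let A_{ij} be an n×n matrix, B_{ij} an m×m invertible matrix, and C_{ij} an n×m matrix over R, such that the block matrices g_{ij} := fromBlocks(A_{ij}, C_{ij}; 0, B_{ij}) satisfy the cocycle condition g_{ij} · g_{jk} = g_{ik} for all i, j, k ∈ ι. Then the matrices φ_{ij} := −C_{ij} · B_{ij}⁻¹ satisfy the twisted 1-cocycle condition φ_{ik} = φ_{ij} + A_{ij} · φ_{jk} · B_{ij}⁻¹ for all i, j, k ∈ ι. -/

import Mathlib

/-- the matrices `φ i j = -(C i j) * (B i j)⁻¹` extracted from a cocycle of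
block upper-triangular matrices satisfy the twisted 1-cocycle condition. -/
theorem extension_class_twisted_cocycle {R : Type*} [CommRing R] {ι : Type*} {n m : ℕ}
    (A : ι → ι → Matrix (Fin n) (Fin n) R)
    (B : ι → ι → Matrix (Fin m) (Fin m) R)
    (C : ι → ι → Matrix (Fin n) (Fin m) R)
    (hB : ∀ i j, IsUnit (B i j).det)
    (hcocycle : ∀ i j k,
      Matrix.fromBlocks (A i j) (C i j) 0 (B i j) *
          Matrix.fromBlocks (A j k) (C j k) 0 (B j k) =
        Matrix.fromBlocks (A i k) (C i k) 0 (B i k)) :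
    ∀ i j k,
      -(C i k) * (B i k)⁻¹ =
        -(C i j) * (B i j)⁻¹ + A i j * (-(C j k) * (B j k)⁻¹) * (B i j)⁻¹ := by
  intro i j k
  have h := hcocycle i j k
  rw [Matrix.fromBlocks_multiply, Matrix.fromBlocks_inj] at h
  obtain ⟨-, hC, -, hBB⟩ := h
  rw [Matrix.zero_mul, zero_add] at hBB
  -- The off-diagonal block gives `C i k`; the lower diagonal block gives
  -- `(B i k)⁻¹ = (B j k)⁻¹ * (B i j)⁻¹`, and `B j k` cancels in the `C i j` term.
  rw [← hC, ← hBB, Matrix.mul_inv_rev, ← Matrix.mul_assoc, neg_add, Matrix.add_mul,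
    Matrix.add_mul, ← Matrix.neg_mul (C i j), Matrix.mul_nonsing_inv_cancel_right _ _ (hB j k),
    add_comm]
  simp only [Matrix.neg_mul, Matrix.mul_neg, Matrix.mul_assoc]
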